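/- Let V be a uniform ℤ-graded vertex algebra with V_n = 0 for all n below some fixed integer m₀, and let B ⊆ V be a set of homogeneous elements equipped with a total order ≤ such that: (i) V is spanned as a ℂ-vector space by the elements b_1(n_1)⋯b_r(n_r)1 with r ≥ 0, b_i ∈ B and n_i ∈ ℤ; (ii) for all a, b ∈ B with a ≤ b and all n ≥ 0, the element a(n)b lies in the linear span of {1} ∪ { L_{−1}^{j} c : c ∈ B, j ≥ 0 }. Then V is already spanned as a ℂ-vector space by the ordered monomials b_1(n_1)⋯b_r(n_r)1 with r ≥ 0, b_i ∈ B, 0 > n_1 ≥ n_2 ≥ ⋯ ≥ n_r, and b_i ≥ b_{i+1} whenever n_i = n_{i+1}. -/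

import Mathlib

/-- A uniform ℤ-graded vertex algebra: a ℤ-graded complex vector space with bilinear
products `a(n)b`, a translation operator `L₋₁`, and a vacuum `1`, satisfying uniform
locality, translation covariance, the vacuum-field axiom and the creation axiom. -/
structure UniformVertexAlgebra (V : Type*) [AddCommGroup V] [Module ℂ V] where
  /-- The grading `V = ⊕_{n ∈ ℤ} V_n`. -/
  grading : ℤ → Submodule ℂ V
  /-- The grading is an (internal) direct sum decomposition of `V`. -/
  decomposition : DirectSum.Decomposition grading
  /-- The bilinear products: `mul n a b` is `a(n)b`. -/
  mul : ℤ → V →ₗ[ℂ] V →ₗ[ℂ] V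
  /-- The translation operator `L₋₁`. -/
  T : V →ₗ[ℂ] V
  /-- The vacuum vector `1`. -/
  vac : V
  vac_mem : vac ∈ grading 0
  /-- `a(n)` maps `V_m` into `V_{m−n+k−1}` whenever `a ∈ V_k`. -/
  mul_mem : ∀ (n k m : ℤ) (a c : V), a ∈ grading k → c ∈ grading m →
    mul n a c ∈ grading (m - n + k - 1)
  /-- `L₋₁` has degree one. -/
  T_mem : ∀ (n : ℤ) (a : V), a ∈ grading n → T a ∈ grading (n + 1)
  /-- Uniform locality, in coefficient form: `(z−t)^N [a(z), b(t)] = 0`. -/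
  locality : ∀ a b : V, ∃ N : ℕ, ∀ (p q : ℤ) (c : V),
    ∑ r ∈ Finset.range (N + 1),
      ((-1 : ℂ) ^ r * (N.choose r : ℂ)) •
        (mul (p + N - r) a (mul (q + r) b c) - mul (q + r) b (mul (p + N - r) a c)) = 0
  /-- Translation covariance: `[L₋₁, a(n)] = −n·a(n−1)`. -/
  translation : ∀ (n : ℤ) (a c : V),
    T (mul n a c) - mul n a (T c) = -(n • mul (n - 1) a c)
  T_vac : T vac = 0
  /-- Vacuum field: `1(n)c = c` if `n = −1` and `0` otherwise. -/
  vac_field : ∀ (n : ℤ) (c : V), mul n vac c = if n = -1 then c else 0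
  /-- Creation: `a(n)1 = 0` for `n ≥ 0`. -/
  creation : ∀ (n : ℤ) (a : V), 0 ≤ n → mul n a vac = 0
  /-- Creation: `a(−1)1 = a`. -/
  create_self : ∀ a : V, mul (-1) a vac = a

/-- The locality statement for a pair `(a,b)` with a specific witness `N`. -/
def UniformVertexAlgebra.LocalityAt {V : Type*} [AddCommGroup V] [Module ℂ V]
    (A : UniformVertexAlgebra V) (a b : V) (N : ℕ) : Prop :=
  ∀ (p q : ℤ) (c : V),
    ∑ r ∈ Finset.range (N + 1),
      ((-1 : ℂ) ^ r * (N.choose r : ℂ)) •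
        (A.mul (p + N - r) a (A.mul (q + r) b c) -
          A.mul (q + r) b (A.mul (p + N - r) a c)) = 0

/-- Iterated application `b_1(n_1)⋯b_r(n_r)1` to the vacuum, for generators drawn from a
set `B ⊆ V`; the pairs `(b_i, n_i)` are given as a list. -/
noncomputable def UniformVertexAlgebra.monomial {V : Type*} [AddCommGroup V] [Module ℂ V]
    (A : UniformVertexAlgebra V) (B : Set V) (l : List (B × ℤ)) : V :=
  l.foldr (fun p x => A.mul p.2 (p.1 : V) x) A.vac

/-!
The modes of the fields of `V` are elements of the Lie ring `End V`. Locality of `a(z)` and `b(t)`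
says that `(m, n) ↦ ⁅a(m), b(n)⁆` is polynomial along the direction `(1, -1)`, so on each line
`m + n = const` it is an integral combination of its iterated differences at one point, which are
modes of the products `a(z)_(j) b(z)`, `j ≥ 0`. By Dong's lemma and Goddard's uniqueness theorem,
`a(z)_(j) b(z)` is the field of `a(j)b`; hence (ii) makes the commutator of two modes of elements
of `B` a combination of the identity and of modes of elements of `B`. Permuting the factors of a
monomial therefore changes it only by shorter monomials, and by induction on the length one may
either sort the factors or, if one of them is a mode `b(n)` with `n ≥ 0`, move it next to the
vacuum, which it kills.
-/

open Module (End)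
open fwdDiff_aux (fwdDiffₗ fwdDiffₗ_apply shiftₗ shiftₗ_apply coe_fwdDiffₗ_pow)

section FwdDiff

variable {G M : Type*} [AddCommMonoid G] [AddCommGroup M]

theorem commute_fwdDiffₗ (h k : G) : Commute (fwdDiffₗ G M h) (fwdDiffₗ G M k) := by
  ext f x
  simp only [End.mul_apply, fwdDiffₗ_apply, fwdDiff, add_right_comm x k h]
  abel

theorem commute_shiftₗ_fwdDiffₗ (h k : G) : Commute (shiftₗ G M h) (fwdDiffₗ G M k) :=
  (commute_fwdDiffₗ h k).add_left (Commute.one_left _)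

theorem fwdDiffₗ_add (h k : G) :
    fwdDiffₗ G M (h + k) = shiftₗ G M h * fwdDiffₗ G M k + fwdDiffₗ G M h := by
  ext f x
  simp [shiftₗ_apply, fwdDiff, add_assoc]

theorem fwdDiffₗ_pow_apply_eq_map {H N : Type*} [AddCommMonoid H] [AddCommGroup N]
    {f : G → M} {F : H → N} {h x : G} {k y : H} (φ : N →+ M)
    (hf : ∀ i : ℕ, f (x + i • h) = φ (F (y + i • k))) (n : ℕ) :
    (fwdDiffₗ G M h ^ n) f x = φ ((fwdDiffₗ H N k ^ n) F y) := by
  simp only [coe_fwdDiffₗ_pow, fwdDiff_iter_eq_sum_shift, hf, map_sum, map_zsmul]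

end FwdDiff

section PolynomialDirections

variable {G M : Type*} [AddCommGroup G] [AddCommGroup M]

theorem fwdDiffₗ_neg (h : G) :
    fwdDiffₗ G M (-h) = -(shiftₗ G M (-h) * fwdDiffₗ G M h) := by
  ext f x
  simp [shiftₗ_apply, fwdDiff]

/-- The directions along which `f` is polynomial, i.e. killed by a power of the forward difference
operator. For the function of modes of `∑ f(m, n) z^{-m-1} t^{-n-1}`, the direction `(1, -1)`
belongs to this subgroup precisely when a power of `z - t` kills the series. -/
def polynomialDirections (f : G → M) : AddSubgroup G where
  carrier := {h | ∃ n, (fwdDiffₗ G M h ^ n) f = 0}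
  zero_mem' := ⟨1, by ext; simp [fwdDiff]⟩
  add_mem' := by
    rintro h k ⟨m, hm⟩ ⟨n, hn⟩
    refine ⟨n + m, (Ideal.mem_torsionOf_iff (R := End ℤ (G → M)) f _).1 ?_⟩
    rw [fwdDiffₗ_add]
    refine Ideal.add_pow_mem_of_pow_mem_of_le_of_commute _ (m := n) (n := m) ?_ hm (by lia)
      ((commute_shiftₗ_fwdDiffₗ h h).mul_left (commute_fwdDiffₗ k h))
    rw [(commute_shiftₗ_fwdDiffₗ h k).mul_pow]
    exact Ideal.mul_mem_left _ _ hn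
  neg_mem' := by
    rintro h ⟨n, hn⟩
    refine ⟨n, ?_⟩
    rw [fwdDiffₗ_neg, neg_pow, (commute_shiftₗ_fwdDiffₗ (-h) h).mul_pow]
    simp [End.mul_apply, hn]

theorem mem_polynomialDirections_of_fwdDiffₗ_pow {f : G → M} {h : G} (n : ℕ)
    (hf : h ∈ polynomialDirections ((fwdDiffₗ G M h ^ n) f)) : h ∈ polynomialDirections f := by
  obtain ⟨m, hm⟩ := hf
  exact ⟨m + n, by rw [pow_add, End.mul_apply, hm]⟩

theorem polynomialDirections_le_fwdDiffₗ_pow (f : G → M) (k : G) (n : ℕ) :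
    polynomialDirections f ≤ polynomialDirections ((fwdDiffₗ G M k ^ n) f) := by
  rintro h ⟨m, hm⟩
  refine ⟨m, ?_⟩
  rw [← End.mul_apply, ((commute_fwdDiffₗ h k).pow_pow m n).eq, End.mul_apply, hm, map_zero]

theorem inf_polynomialDirections_le_sub (f g : G → M) :
    polynomialDirections f ⊓ polynomialDirections g ≤ polynomialDirections (f - g) := by
  rintro h ⟨⟨m, hm⟩, ⟨n, hn⟩⟩
  refine ⟨max m n, ?_⟩
  rw [map_sub, End.pow_map_zero_of_le (le_max_left m n) hm,
    End.pow_map_zero_of_le (le_max_right m n) hn, sub_zero]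

theorem mem_polynomialDirections_of_eq_map {H N : Type*} [AddCommGroup H] [AddCommGroup N]
    {f : G → M} {F : H → N} {h : G} {k : H} (φ : G → N →+ M) (π : G → H)
    (hf : ∀ (x : G) (i : ℕ), f (x + i • h) = φ x (F (π x + i • k)))
    (hF : k ∈ polynomialDirections F) : h ∈ polynomialDirections f := by
  obtain ⟨n, hn⟩ := hF
  refine ⟨n, funext fun x ↦ ?_⟩
  rw [fwdDiffₗ_pow_apply_eq_map (φ x) (hf x), hn, Pi.zero_apply, map_zero, Pi.zero_apply]

theorem polynomialDirections_le_comp_add (f : G → M) (k : G) :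
    polynomialDirections f ≤ polynomialDirections fun x ↦ f (x + k) := fun h ↦
  mem_polynomialDirections_of_eq_map (fun _ ↦ AddMonoidHom.id M) (· + k) fun x i ↦ by
    simp [add_right_comm]

theorem polynomialDirections_le_smul (f : G → M) (ψ : G →+ ℤ) :
    polynomialDirections f ≤ polynomialDirections fun x ↦ ψ x • f x := by
  rintro h ⟨n, hn⟩
  induction n generalizing f with
  | zero => exact ⟨0, by simp_all [funext_iff]⟩
  | succ n ih =>
    refine mem_polynomialDirections_of_fwdDiffₗ_pow 1 ?_
    have leibniz : (fwdDiffₗ G M h ^ 1) (fun x ↦ ψ x • f x) =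
        (fun x ↦ ψ x • fwdDiffₗ G M h f x) - (fun x ↦ -ψ h • f (x + h)) := by
      ext x
      simp only [pow_one, fwdDiffₗ_apply, fwdDiff, Pi.sub_apply, map_add]
      module
    rw [leibniz]
    refine inf_polynomialDirections_le_sub _ _ ⟨ih _ ?_, ?_⟩
    · rw [← hn, pow_succ, End.mul_apply]
    · exact mem_polynomialDirections_of_eq_map (fun _ ↦ zsmulAddGroupHom (-ψ h)) (· + h)
        (fun x i ↦ by simp [add_right_comm]) ⟨n + 1, hn⟩

theorem apply_add_zsmul_mem_of_fwdDiffₗ_pow_mem {f : G → M} {h : G}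
    (hf : h ∈ polynomialDirections f) {U : AddSubgroup M} {y : G}
    (hU : ∀ j, (fwdDiffₗ G M h ^ j) f y ∈ U) (m : ℤ) : f (y + m • h) ∈ U := by
  obtain ⟨n, hn⟩ := hf
  induction n generalizing f m with
  | zero => simp_all [funext_iff]
  | succ n ih =>
    have diff_mem (m : ℤ) : f (y + (m + 1) • h) - f (y + m • h) ∈ U := by
      have := ih (f := fwdDiffₗ G M h f) (fun j ↦ by simpa [pow_succ] using hU (j + 1)) m
        (by simpa [pow_succ] using hn)
      simpa [fwdDiff, add_assoc, add_smul] using this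
    induction m with
    | zero => simpa using hU 0
    | succ m hm => simpa using U.add_mem (diff_mem m) hm
    | pred m hm => simpa using U.sub_mem hm (diff_mem (-m - 1))

end PolynomialDirections

section Modes

variable {L : Type*} [LieRing L]

/-- The modes `⁅a(m), b(n)⁆` of the commutator of two formal distributions `∑ a(n) z^{-n-1}`
and `∑ b(n) t^{-n-1}`, each encoded by its sequence of modes. -/
def modeBracket (a b : ℤ → L) (x : ℤ × ℤ) : L := ⁅a x.1, b x.2⁆

/-- Mutual locality: some power of `z - t` kills the commutator of two formal distributions. -/
def MutuallyLocal (a b : ℤ → L) : Prop :=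
  ((1, -1) : ℤ × ℤ) ∈ polynomialDirections (modeBracket a b)

/-- The `j`-th product of formal distributions: the residue at `z = t` of
`(z - t)^j ⁅a(z), b(t)⁆`. Its `n`-th mode is `∑ r, (-1)^r C(j, r) ⁅a(j - r), b(n + r)⁆`; the
difference operator in the direction `(1, -1)` is `z - t` followed by a shift of the second index,
which the evaluation point `(0, n + j)` undoes. -/
def modeProduct (j : ℕ) (a b : ℤ → L) (n : ℤ) : L :=
  (fwdDiffₗ (ℤ × ℤ) L (1, -1) ^ j) (modeBracket a b) (0, n + j)

/-- The modes of the formal derivative `∂_z a(z)`. -/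
def modeDerivative (a : ℤ → L) (n : ℤ) : L := -(n • a (n - 1))

/-- Translation covariance `⁅T, a(z)⁆ = ∂_z a(z)`. -/
def TranslationCovariant (T : L) (a : ℤ → L) : Prop := ∀ n, ⁅T, a n⁆ = modeDerivative a n

theorem MutuallyLocal.sub {a b c : ℤ → L} (hac : MutuallyLocal a c) (hbc : MutuallyLocal b c) :
    MutuallyLocal (a - b) c := by
  have bracket_sub : modeBracket (a - b) c = modeBracket a c - modeBracket b c := by
    ext x
    simp [modeBracket]
  rw [MutuallyLocal, bracket_sub]
  exact inf_polynomialDirections_le_sub _ _ ⟨hac, hbc⟩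

theorem MutuallyLocal.modeDerivative_left {a b : ℤ → L} (h : MutuallyLocal a b) :
    MutuallyLocal (modeDerivative a) b := by
  have bracket_derivative : modeBracket (modeDerivative a) b =
      fun x ↦ (-AddMonoidHom.fst ℤ ℤ) x • modeBracket a b (x + (-1, 0)) := by
    ext x
    simp [modeBracket, modeDerivative, sub_eq_add_neg]
  rw [MutuallyLocal, bracket_derivative]
  exact polynomialDirections_le_smul _ _ (polynomialDirections_le_comp_add _ _ h)

/-- Powers of `x - y`, `x - z` and `y - z` kill `⁅a(x), b(y)⁆`, `⁅a(x), c(z)⁆` and `⁅b(y), c(z)⁆`.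
By the Jacobi identity, powers of `(x - z) (y - z)` and of `x - y` then kill the triple bracket,
and hence so does a power of `y - z = (x - z) - (x - y)`. -/
theorem mem_polynomialDirections_lie_lie {a b c : ℤ → L} (hab : MutuallyLocal a b)
    (hac : MutuallyLocal a c) (hbc : MutuallyLocal b c) :
    ((0, 1, -1) : ℤ × ℤ × ℤ) ∈
      polynomialDirections fun x : ℤ × ℤ × ℤ ↦ ⁅⁅a x.1, b x.2.1⁆, c x.2.2⁆ := by
  set f : ℤ × ℤ × ℤ → L := fun x ↦ ⁅⁅a x.1, b x.2.1⁆, c x.2.2⁆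
  let f₁ (x : ℤ × ℤ × ℤ) : L := ⁅a x.1, ⁅b x.2.1, c x.2.2⁆⁆
  let f₂ (x : ℤ × ℤ × ℤ) : L := ⁅b x.2.1, ⁅a x.1, c x.2.2⁆⁆
  have jacobi : f = f₁ - f₂ := funext fun x ↦ lie_lie ..
  have mem_f : (1, -1, 0) ∈ polynomialDirections f :=
    mem_polynomialDirections_of_eq_map (fun x ↦ -LieRingModule.toEnd L L (c x.2.2))
      (fun x ↦ (x.1, x.2.1)) (fun x i ↦ by simp [f, modeBracket]) hab
  have mem_f₁ : (0, 1, -1) ∈ polynomialDirections f₁ :=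
    mem_polynomialDirections_of_eq_map (fun x ↦ LieRingModule.toEnd L L (a x.1))
      (fun x ↦ x.2) (fun x i ↦ by simp [f₁, modeBracket]) hbc
  have mem_f₂ : (1, 0, -1) ∈ polynomialDirections f₂ :=
    mem_polynomialDirections_of_eq_map (fun x ↦ LieRingModule.toEnd L L (b x.2.1))
      (fun x ↦ (x.1, x.2.2)) (fun x i ↦ by simp [f₂, modeBracket]) hac
  obtain ⟨n, hn⟩ := mem_f₁
  have mem_diff : (1, 0, -1) ∈ polynomialDirections ((fwdDiffₗ _ L (0, 1, -1) ^ n) f) := by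
    rw [jacobi, map_sub, hn]
    exact inf_polynomialDirections_le_sub _ _
      ⟨⟨0, map_zero _⟩, polynomialDirections_le_fwdDiffₗ_pow _ _ _ mem_f₂⟩
  refine mem_polynomialDirections_of_fwdDiffₗ_pow n ?_
  simpa using sub_mem mem_diff (polynomialDirections_le_fwdDiffₗ_pow _ _ _ mem_f)

/-- **Dong's lemma** -/
theorem MutuallyLocal.modeProduct_left {a b c : ℤ → L} (hab : MutuallyLocal a b)
    (hac : MutuallyLocal a c) (hbc : MutuallyLocal b c) (j : ℕ) :
    MutuallyLocal (modeProduct j a b) c := by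
  let f (x : ℤ × ℤ × ℤ) : L := ⁅⁅a x.1, b x.2.1⁆, c x.2.2⁆
  have slice (x : ℤ × ℤ × ℤ) : (fwdDiffₗ _ L (1, -1, 0) ^ j) f x =
      ⁅(fwdDiffₗ _ L (1, -1) ^ j) (modeBracket a b) (x.1, x.2.1), c x.2.2⁆ := by
    rw [← lie_skew]
    exact fwdDiffₗ_pow_apply_eq_map (-LieRingModule.toEnd L L (c x.2.2))
      (fun i ↦ by simp [f, modeBracket]) j
  refine mem_polynomialDirections_of_eq_map (fun _ ↦ AddMonoidHom.id L)
    (fun x ↦ (0, x.1 + j, x.2)) (fun x i ↦ ?_)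
    (polynomialDirections_le_fwdDiffₗ_pow f (1, -1, 0) j
      (mem_polynomialDirections_lie_lie hab hac hbc))
  simp [slice, modeBracket, modeProduct, add_right_comm]

theorem lie_fwdDiffₗ_pow_modeBracket {T : L} {a b : ℤ → L} (ha : TranslationCovariant T a)
    (hb : TranslationCovariant T b) (j : ℕ) (m n : ℤ) :
    let f := (fwdDiffₗ (ℤ × ℤ) L (1, -1) ^ j) (modeBracket a b)
    ⁅T, f (m, n)⁆ = -(m • f (m - 1, n)) - (n - j) • f (m, n - 1) := by
  induction j generalizing m n with
  | zero => simp [modeBracket, leibniz_lie T, ha m, hb n, modeDerivative, sub_eq_add_neg]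
  | succ j ih =>
    simp only [pow_succ', End.mul_apply, fwdDiffₗ_apply, fwdDiff, Prod.mk_add_mk, lie_sub, ih,
      sub_add_cancel, add_sub_cancel_right, ← sub_eq_add_neg]
    push_cast
    rw [sub_right_comm n 1 1]
    module

theorem TranslationCovariant.modeProduct {T : L} {a b : ℤ → L} (ha : TranslationCovariant T a)
    (hb : TranslationCovariant T b) (j : ℕ) : TranslationCovariant T (modeProduct j a b) := by
  intro n
  simpa [_root_.modeProduct, modeDerivative, sub_add_eq_add_sub] using
    lie_fwdDiffₗ_pow_modeBracket ha hb j 0 (n + j)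

theorem TranslationCovariant.modeDerivative {T : L} {a : ℤ → L} (ha : TranslationCovariant T a) :
    TranslationCovariant T (modeDerivative a) := fun n ↦ by
  simp [_root_.modeDerivative, ha (n - 1)]

theorem TranslationCovariant.sub {T : L} {a b : ℤ → L} (ha : TranslationCovariant T a)
    (hb : TranslationCovariant T b) : TranslationCovariant T (a - b) := fun n ↦ by
  simp only [Pi.sub_apply, lie_sub, ha n, hb n, _root_.modeDerivative, smul_sub]
  abel

theorem lie_mem_of_modeProduct_mem {a b : ℤ → L} (hab : MutuallyLocal a b) {U : AddSubgroup L}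
    (hU : ∀ (j : ℕ) (n : ℤ), modeProduct j a b n ∈ U) (m n : ℤ) : ⁅a m, b n⁆ ∈ U := by
  have := apply_add_zsmul_mem_of_fwdDiffₗ_pow_mem hab (U := U) (y := (0, m + n))
    (fun j ↦ by simpa [modeProduct] using hU j (m + n - j)) m
  simpa [modeBracket] using this

end Modes

section Creation

attribute [local instance] LieRing.ofAssociativeRing

variable {R V : Type*} [Ring R] [AddCommGroup V] [Module R V]

theorem fwdDiffₗ_pow_modeBracket_apply {a b : ℤ → End R V} {v : V} {m : ℤ}
    (ha : ∀ i, m ≤ i → a i v = 0) (hb : ∀ i, 0 ≤ i → b i v = 0) {j : ℕ} {n : ℤ}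
    (hn : -1 ≤ n - j) :
    (fwdDiffₗ (ℤ × ℤ) (End R V) (1, -1) ^ j) (modeBracket a b) (m, n) v =
      a (m + j) (b (n - j) v) := by
  induction j generalizing m n with
  | zero => simp [modeBracket, Ring.lie_def, ha m le_rfl]
  | succ j ih =>
    push_cast at hn
    have next := ih (m := m + 1) (n := n - 1) (fun i hi ↦ ha i (by lia)) (by lia)
    have prev := ih (m := m) (n := n) ha (by lia)
    rw [hb _ (by lia), map_zero] at prev
    rw [pow_succ', End.mul_apply, fwdDiffₗ_apply, fwdDiff, Prod.mk_add_mk, LinearMap.sub_apply,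
      ← sub_eq_add_neg, next, prev, sub_zero]
    push_cast
    ring_nf

theorem modeProduct_apply {a b : ℤ → End R V} {v : V} (ha : ∀ i, 0 ≤ i → a i v = 0)
    (hb : ∀ i, 0 ≤ i → b i v = 0) (j : ℕ) {n : ℤ} (hn : -1 ≤ n) :
    modeProduct j a b n v = a j (b n v) := by
  simpa [modeProduct] using fwdDiffₗ_pow_modeBracket_apply ha hb (j := j) (n := n + j) (by lia)

theorem TranslationCovariant.apply_eq_zero [IsAddTorsionFree V] {T : End R V} {d : ℤ → End R V}
    (hd : TranslationCovariant T d) {v : V} (hT : T v = 0) (hv : ∀ n, -1 ≤ n → d n v = 0) (n : ℤ) :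
    d n v = 0 := by
  have descend {n : ℤ} (hn : d n v = 0) : n • d (n - 1) v = 0 := by
    simpa [Ring.lie_def, _root_.modeDerivative, hn, hT] using (LinearMap.congr_fun (hd n) v).symm
  rcases le_total (-1) n with hn | hn
  · exact hv n hn
  · induction n, hn using Int.leInductionDown with
    | base => exact hv _ le_rfl
    | pred n hn ih => exact (smul_eq_zero.1 (descend ih)).resolve_left (by lia)

theorem MutuallyLocal.apply_create_eq_zero {d a : ℤ → End R V} (h : MutuallyLocal d a) {v : V}
    (hd : ∀ n, d n v = 0) (ha : ∀ n, 0 ≤ n → a n v = 0) (n : ℤ) : d n (a (-1) v) = 0 := by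
  obtain ⟨N, hN⟩ := h
  have := fwdDiffₗ_pow_modeBracket_apply (m := n - N) (n := N - 1) (fun i _ ↦ hd i) ha (j := N)
    (by lia)
  simpa [hN] using this.symm

end Creation

namespace UniformVertexAlgebra

open Submodule

attribute [local instance] LieRing.ofAssociativeRing

variable {V : Type*} [AddCommGroup V] [Module ℂ V] (A : UniformVertexAlgebra V)

/-- The field `a(z) = ∑ a(n) z^{-n-1}` of a vector, encoded by its sequence of modes. -/
def field (a : V) (n : ℤ) : End ℂ V := A.mul n a

theorem mutuallyLocal_field (a b : V) : MutuallyLocal (A.field a) (A.field b) := by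
  obtain ⟨N, hN⟩ := A.locality a b
  refine ⟨N, funext fun ⟨p, q⟩ ↦ LinearMap.ext fun c ↦ ?_⟩
  rw [coe_fwdDiffₗ_pow, fwdDiff_iter_eq_sum_shift, LinearMap.sum_apply,
    ← Finset.sum_range_reflect, Pi.zero_apply, LinearMap.zero_apply, ← hN p (q - N) c]
  refine Finset.sum_congr rfl fun r hr ↦ ?_
  obtain ⟨s, rfl⟩ := Nat.exists_eq_add_of_le (Finset.mem_range_succ_iff.1 hr)
  have choose_reflect : (r + s).choose s = (r + s).choose r := Nat.choose_symm_add.symm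
  have shift_left : p + ((r : ℤ) + s) - r = p + s := by ring
  have shift_right : q - ((r : ℤ) + s) + r = q + -s := by ring
  rw [LinearMap.smul_apply, ← Int.cast_smul_eq_zsmul ℂ]
  simp [modeBracket, Ring.lie_def, field, choose_reflect, shift_left, shift_right]

theorem translationCovariant_field (a : V) : TranslationCovariant A.T (A.field a) := fun n ↦ by
  ext c
  simp [Ring.lie_def, field, modeDerivative, A.translation]

/-- **Goddard's uniqueness theorem** -/
theorem eq_zero_of_mutuallyLocal {d : ℤ → End ℂ V} (hT : TranslationCovariant A.T d)
    (hlocal : ∀ a, MutuallyLocal d (A.field a)) (hvac : ∀ n, -1 ≤ n → d n A.vac = 0) : d = 0 := by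
  have : IsAddTorsionFree V := .of_isTorsionFree ℂ V
  ext n a
  simpa [field, A.create_self] using (hlocal a).apply_create_eq_zero
    (hT.apply_eq_zero A.T_vac hvac) (fun i ↦ A.creation i a) n

theorem field_apply_vac (a : V) {n : ℤ} (hn : -1 ≤ n) :
    A.field a n A.vac = if n = -1 then a else 0 := by
  split_ifs with h
  · rw [h, field, A.create_self]
  · exact A.creation n a (by lia)

theorem field_mul (j : ℕ) (a b : V) :
    A.field (A.mul j a b) = modeProduct j (A.field a) (A.field b) := by
  have ha := A.translationCovariant_field a
  have hb := A.translationCovariant_field b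
  refine sub_eq_zero.1 (A.eq_zero_of_mutuallyLocal
    ((A.translationCovariant_field _).sub (ha.modeProduct hb j)) (fun c ↦ ?_) fun n hn ↦ ?_)
  · exact (A.mutuallyLocal_field _ c).sub ((A.mutuallyLocal_field a b).modeProduct_left
      (A.mutuallyLocal_field a c) (A.mutuallyLocal_field b c) j)
  · rw [Pi.sub_apply, LinearMap.sub_apply, modeProduct_apply (a := A.field a)
      (b := A.field b) (fun i ↦ A.creation i a) (fun i ↦ A.creation i b) j hn,
      A.field_apply_vac _ hn, A.field_apply_vac _ hn, apply_ite (A.field a j), map_zero, field,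
      sub_self]

theorem field_T (a : V) : A.field (A.T a) = modeDerivative (A.field a) := by
  have ha := A.translationCovariant_field a
  refine sub_eq_zero.1 (A.eq_zero_of_mutuallyLocal
    ((A.translationCovariant_field _).sub ha.modeDerivative) (fun c ↦ ?_) fun n hn ↦ ?_)
  · exact (A.mutuallyLocal_field _ c).sub (A.mutuallyLocal_field a c).modeDerivative_left
  · rw [Pi.sub_apply, ← ha n, Ring.lie_def, LinearMap.sub_apply, LinearMap.sub_apply,
      End.mul_apply, End.mul_apply, A.T_vac, map_zero, sub_zero, A.field_apply_vac _ hn,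
      A.field_apply_vac _ hn, apply_ite A.T, map_zero, sub_self]

theorem field_vac (n : ℤ) : A.field A.vac n = if n = -1 then 1 else 0 := by
  ext c
  rw [field, A.vac_field]
  split_ifs <;> rfl

theorem lie_field_mem {a b : V} {U : Submodule ℂ (End ℂ V)}
    (hU : ∀ (j : ℕ) (n : ℤ), A.field (A.mul j a b) n ∈ U) (m n : ℤ) :
    ⁅A.field a m, A.field b n⁆ ∈ U :=
  lie_mem_of_modeProduct_mem (A.mutuallyLocal_field a b) (U := U.toAddSubgroup)
    (fun j n ↦ A.field_mul j a b ▸ hU j n) m n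

variable (B : Set V)

/-- The span of the vacuum and the translates `L₋₁^j c` of the elements of `B`: the vectors allowed
as singular coefficients `a(n)b` in the operator product expansions of elements of `B`. -/
def translateSpan : Submodule ℂ V :=
  span ℂ (insert A.vac {x | ∃ (c : B) (j : ℕ), x = (A.T ^ j) (c : V)})

/-- The span of the identity and the modes `c(n)` of the elements of `B`, the space in which the
commutators of these modes will lie. -/
def modeSpan : Submodule ℂ (End ℂ V) :=
  span ℂ (insert 1 {f | ∃ (c : B) (n : ℤ), f = A.field c n})

/-- The filtration of `V` by the length of monomials, with a strict bound so that it starts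
at `⊥`. -/
def lengthLT (k : ℕ) : Submodule ℂ V :=
  span ℂ {x | ∃ l : List (B × ℤ), l.length < k ∧ x = A.monomial B l}

/-- The span of the monomials all of whose modes are negative and whose consecutive factors are
related by `r`. -/
def orderedSpan (r : B × ℤ → B × ℤ → Prop) : Submodule ℂ V :=
  span ℂ {x | ∃ l : List (B × ℤ), (∀ p ∈ l, p.2 < 0) ∧ l.IsChain r ∧ x = A.monomial B l}

variable {B}

theorem field_mem_modeSpan (c : B) (n : ℤ) : A.field c n ∈ A.modeSpan B :=
  subset_span (.inr ⟨c, n, rfl⟩)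

theorem field_T_pow_mem_modeSpan (c : B) (j : ℕ) (n : ℤ) :
    A.field ((A.T ^ j) c) n ∈ A.modeSpan B := by
  induction j generalizing n with
  | zero => exact A.field_mem_modeSpan c n
  | succ j ih =>
    rw [pow_succ', End.mul_apply, field_T]
    exact neg_mem (zsmul_mem (ih _) n)

theorem field_mem_modeSpan_of_mem_translateSpan {a : V} (ha : a ∈ A.translateSpan B) (n : ℤ) :
    A.field a n ∈ A.modeSpan B := by
  refine (span_le (p := (A.modeSpan B).comap (A.mul n))).2 ?_ ha
  rintro _ (rfl | ⟨c, j, rfl⟩)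
  · change A.field A.vac n ∈ A.modeSpan B
    rw [field_vac]
    split_ifs
    · exact subset_span (.inl rfl)
    · exact zero_mem _
  · exact A.field_T_pow_mem_modeSpan c j n

theorem lie_field_mem_modeSpan {a b : V}
    (h : (∀ n, 0 ≤ n → A.mul n a b ∈ A.translateSpan B) ∨
      ∀ n, 0 ≤ n → A.mul n b a ∈ A.translateSpan B) (m n : ℤ) :
    ⁅A.field a m, A.field b n⁆ ∈ A.modeSpan B := by
  rcases h with h | h
  · exact A.lie_field_mem
      (fun j ↦ A.field_mem_modeSpan_of_mem_translateSpan (h j j.cast_nonneg)) m n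
  · rw [← lie_skew]
    exact neg_mem (A.lie_field_mem
      (fun j ↦ A.field_mem_modeSpan_of_mem_translateSpan (h j j.cast_nonneg)) n m)

theorem monomial_cons (p : B × ℤ) (l : List (B × ℤ)) :
    A.monomial B (p :: l) = A.field p.1 p.2 (A.monomial B l) :=
  rfl

theorem monomial_append_singleton_eq_zero (l : List (B × ℤ)) {p : B × ℤ} (hp : 0 ≤ p.2) :
    A.monomial B (l ++ [p]) = 0 := by
  induction l with
  | nil => exact A.creation p.2 p.1 hp
  | cons q l ih => rw [List.cons_append, monomial_cons, ih, map_zero]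

theorem monomial_mem_lengthLT {l : List (B × ℤ)} {k : ℕ} (hl : l.length < k) :
    A.monomial B l ∈ A.lengthLT B k :=
  subset_span ⟨l, hl, rfl⟩

theorem lengthLT_mono : Monotone (A.lengthLT B) := fun _ _ h ↦
  span_mono fun _ ⟨l, hl, hx⟩ ↦ ⟨l, hl.trans_le h, hx⟩

theorem apply_mem_lengthLT_succ {f : End ℂ V} (hf : f ∈ A.modeSpan B) {k : ℕ} {x : V}
    (hx : x ∈ A.lengthLT B k) : f x ∈ A.lengthLT B (k + 1) := by
  refine LinearMap.BilinMap.apply_apply_mem_of_mem_span _ _ _ LinearMap.id ?_ f x hf hx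
  rintro _ (rfl | ⟨c, n, rfl⟩) _ ⟨l, hl, rfl⟩
  · exact A.monomial_mem_lengthLT (hl.trans k.lt_succ_self)
  · exact A.monomial_mem_lengthLT (l := (c, n) :: l) (Nat.succ_lt_succ hl)

theorem monomial_sub_mem_lengthLT_of_perm
    (hlie : ∀ (b c : B) (m n : ℤ), ⁅A.field b m, A.field c n⁆ ∈ A.modeSpan B)
    {l l' : List (B × ℤ)} (h : l.Perm l') :
    A.monomial B l - A.monomial B l' ∈ A.lengthLT B l.length := by
  induction h with
  | nil => exact sub_self A.vac ▸ zero_mem _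
  | cons p _ ih =>
    rw [monomial_cons, monomial_cons, ← map_sub]
    exact A.apply_mem_lengthLT_succ (A.field_mem_modeSpan p.1 p.2) ih
  | swap p q l =>
    exact A.apply_mem_lengthLT_succ (hlie q.1 p.1 q.2 p.2)
      (A.monomial_mem_lengthLT l.length.lt_succ_self)
  | trans h _ ih ih' =>
    rw [← sub_add_sub_cancel]
    exact add_mem ih (h.length_eq ▸ ih')

theorem exists_perm_monomial_mem_orderedSpan (r : B × ℤ → B × ℤ → Prop) [Std.Total r]
    [IsTrans (B × ℤ) r] (l : List (B × ℤ)) :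
    ∃ l', l.Perm l' ∧ A.monomial B l' ∈ A.orderedSpan B r := by
  classical
  by_cases hneg : ∀ p ∈ l, p.2 < 0
  · have sorted := (List.pairwise_insertionSort r l).isChain
    have perm := List.perm_insertionSort r l
    exact ⟨_, perm.symm, subset_span ⟨_, fun p hp ↦ hneg p (perm.mem_iff.1 hp), sorted, rfl⟩⟩
  · push Not at hneg
    obtain ⟨p, hp, hp0⟩ := hneg
    refine ⟨l.erase p ++ [p], ?_, ?_⟩
    · exact (List.perm_cons_erase hp).trans (List.perm_append_singleton ..).symm
    · exact A.monomial_append_singleton_eq_zero _ hp0 ▸ zero_mem _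

theorem lengthLT_le_orderedSpan
    (hlie : ∀ (b c : B) (m n : ℤ), ⁅A.field b m, A.field c n⁆ ∈ A.modeSpan B)
    (r : B × ℤ → B × ℤ → Prop) [Std.Total r] [IsTrans (B × ℤ) r] (k : ℕ) :
    A.lengthLT B k ≤ A.orderedSpan B r := by
  induction k with
  | zero => exact span_le.2 (by simp)
  | succ k ih =>
    refine span_le.2 ?_
    rintro _ ⟨l, hl, rfl⟩
    obtain ⟨l', perm, hl'⟩ := A.exists_perm_monomial_mem_orderedSpan r l
    have hsub : A.monomial B l - A.monomial B l' ∈ A.lengthLT B k :=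
      A.lengthLT_mono (Nat.le_of_lt_succ hl) (A.monomial_sub_mem_lengthLT_of_perm hlie perm)
    exact (sub_mem_iff_left _ hl').1 (ih hsub)

end UniformVertexAlgebra

theorem span_ordered_monomials_general {V : Type*} [AddCommGroup V] [Module ℂ V]
    (A : UniformVertexAlgebra V) (B : Set V) (r : B × ℤ → B × ℤ → Prop) [Std.Total r]
    [IsTrans (B × ℤ) r]
    (hspan : Submodule.span ℂ {x : V | ∃ l : List (B × ℤ), x = A.monomial B l} = ⊤)
    (hOPE : ∀ a b : B, (∀ n, 0 ≤ n → A.mul n a b ∈ A.translateSpan B) ∨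
      ∀ n, 0 ≤ n → A.mul n b a ∈ A.translateSpan B) :
    A.orderedSpan B r = ⊤ := by
  rw [← top_le_iff, ← hspan, Submodule.span_le]
  rintro _ ⟨l, rfl⟩
  exact A.lengthLT_le_orderedSpan (fun a b ↦ A.lie_field_mem_modeSpan (hOPE a b)) r
    (l.length + 1) (A.monomial_mem_lengthLT l.length.lt_succ_self)

/-- let `V` be a uniform vertex algebra with `V_n = 0` for `n < m₀`, and let
`B` be a totally ordered set of homogeneous elements such that (i) the monomials
`b_1(n_1)⋯b_r(n_r)1` with `b_i ∈ B` span `V`, and (ii) each `a(n)b` for `a ≤ b` in `B` and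
`n ≥ 0` lies in the span of `{1} ∪ {L₋₁^j c : c ∈ B}`.  Then the *ordered* monomials —
those with `0 > n_1 ≥ n_2 ≥ ⋯ ≥ n_r` and `b_i ≥ b_{i+1}` whenever `n_i = n_{i+1}` —
already span `V`. -/
theorem span_ordered_monomials {V : Type*} [AddCommGroup V] [Module ℂ V]
    (A : UniformVertexAlgebra V) (m₀ : ℤ)
    (hconn : ∀ n : ℤ, n < m₀ → A.grading n = ⊥)
    (B : Set V) (lo : LinearOrder B)
    (hhom : ∀ b ∈ B, ∃ d : ℤ, b ∈ A.grading d)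
    (hspan : Submodule.span ℂ {x : V | ∃ l : List (B × ℤ), x = A.monomial B l} = ⊤)
    (hOPE : ∀ a b : B, lo.le a b → ∀ n : ℤ, 0 ≤ n →
      A.mul n (a : V) (b : V) ∈
        Submodule.span ℂ
          (insert A.vac {x : V | ∃ (c : B) (j : ℕ), x = (A.T ^ j) (c : V)})) :
    Submodule.span ℂ
      {x : V | ∃ l : List (B × ℤ),
        (∀ p ∈ l, p.2 < 0) ∧
        l.Chain' (fun p q => q.2 ≤ p.2 ∧ (p.2 = q.2 → lo.le q.1 p.1)) ∧
        x = A.monomial B l} = ⊤ := by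
  let r : B × ℤ → B × ℤ → Prop :=
    Order.Preimage (fun p ↦ toLex (p.2, p.1)) (· ≥ ·)
  have lex_iff : r = fun p q ↦ q.2 ≤ p.2 ∧ (p.2 = q.2 → lo.le q.1 p.1) := by
    ext p q
    simp [r, Order.Preimage, Prod.Lex.toLex_le_toLex', eq_comm]
  have h := span_ordered_monomials_general A B r hspan fun a b ↦
    (lo.le_total a b).imp (hOPE a b) (hOPE b a)
  rwa [lex_iff] at h
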